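/- Let (X_n, p_{n+1}) be a tower of fibrations of pointed spaces with a chosen basepoint of lim_n X_n, and let k ≥ 0. Then the function φ̃ : Ker P → lim¹_n π_{k+1}X_n is surjective: for every family of maps γ_n : I^{k+1} → X_n (n ≥ 0) sending ∂I^{k+1} to the basepoint, there exists a map α : I^k → lim_n X_n sending ∂I^k to the basepoint, with [α] in the kernel of P : π_k(lim_n X_n) → lim_n π_k X_n, such that φ̃([α]) equals the orbit of ([γ_n])_{n≥0} in lim¹_n π_{k+1}X_n. -/

import Mathlib

open scoped unitInterval Topology Topology.Homotopy

noncomputable section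

/-- A map is a *Serre fibration* if it has the homotopy lifting property
with respect to all cubes `I^k`. -/
def IsSerreFibration {E B : Type} [TopologicalSpace E] [TopologicalSpace B]
    (p : C(E, B)) : Prop :=
  ∀ (k : ℕ) (f : C((Fin k → I), E)) (H : C(I × (Fin k → I), B)),
    (∀ q, H (0, q) = p (f q)) →
      ∃ G : C(I × (Fin k → I), E),
        (∀ q, G (0, q) = f q) ∧ ∀ z, p (G z) = H z

/-- The inverse limit of a tower of spaces. -/
def TowerLim (X : ℕ → Type) [∀ n, TopologicalSpace (X n)]
    (p : ∀ n, C(X (n + 1), X n)) : Type :=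
  { z : ∀ n, X n // ∀ n, p n (z (n + 1)) = z n }

instance {X : ℕ → Type} [∀ n, TopologicalSpace (X n)] (p : ∀ n, C(X (n + 1), X n)) :
    TopologicalSpace (TowerLim X p) :=
  instTopologicalSpaceSubtype

/-- The projection from the inverse limit of a tower to the `n`th space. -/
def TowerLim.proj {X : ℕ → Type} [∀ n, TopologicalSpace (X n)]
    {p : ∀ n, C(X (n + 1), X n)} (n : ℕ) : C(TowerLim X p, X n) :=
  ⟨fun z => z.1 n, (continuous_apply n).comp continuous_subtype_val⟩

/-- The map induced on homotopy groups (in particular on `π_k` for `N = Fin k`)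
by a continuous map `f` with `f x = y`. -/
def piMap {X Y : Type} [TopologicalSpace X] [TopologicalSpace Y] (N : Type)
    (f : C(X, Y)) {x : X} {y : Y} (hf : f x = y) :
    HomotopyGroup N X x → HomotopyGroup N Y y :=
  Quotient.map
    (fun g => (⟨f.comp g.1, fun q hq => by
        rw [ContinuousMap.comp_apply, g.2 q hq, hf]⟩ : GenLoop N Y y))
    (fun g h H => H.map fun F => F.compContinuousMap f)


/-- The map `π_k (lim_n X_n) → π_k (X n)` induced by the projection `TowerLim.proj n`,
for the basepoint `⟨x, hx⟩` of the inverse limit. -/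
def piProjMap {X : ℕ → Type} [∀ n, TopologicalSpace (X n)] {p : ∀ n, C(X (n + 1), X n)}
    (k : ℕ) {x : ∀ n, X n} (hx : ∀ n, p n (x (n + 1)) = x n) (n : ℕ) :
    HomotopyGroup (Fin k) (TowerLim X p) (⟨x, hx⟩ : TowerLim X p) →
      HomotopyGroup (Fin k) (X n) (x n) :=
  piMap (Fin k) (TowerLim.proj n) rfl

/-- The map `π_k (X (n+1)) → π_k (X n)` induced by the map `p n` of the tower. -/
def piTowerMap {X : ℕ → Type} [∀ n, TopologicalSpace (X n)] {p : ∀ n, C(X (n + 1), X n)}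
    (k : ℕ) {x : ∀ n, X n} (hx : ∀ n, p n (x (n + 1)) = x n) (n : ℕ) :
    HomotopyGroup (Fin k) (X (n + 1)) (x (n + 1)) → HomotopyGroup (Fin k) (X n) (x n) :=
  piMap (Fin k) (p n) (hx n)

/-- The distinguished basepoint of `HomotopyGroup N X x`: the class of the constant map. -/
def piConst {X : Type} [TopologicalSpace X] (N : Type) (x : X) : HomotopyGroup N X x :=
  ⟦GenLoop.const⟧

/-- The class in `HomotopyGroup N X x` of a generalized loop. -/
def piCls {N X : Type} [TopologicalSpace X] {x : X} (g : GenLoop N X x) :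
    HomotopyGroup N X x :=
  ⟦g⟧

/-- The generalized loop obtained by composing a generalized loop with a continuous map
`f` satisfying `f x = y`. -/
def genLoopMap {X Y : Type} [TopologicalSpace X] [TopologicalSpace Y] (N : Type)
    (f : C(X, Y)) {x : X} {y : Y} (hf : f x = y) (g : GenLoop N X x) : GenLoop N Y y :=
  ⟨f.comp g.1, fun q hq => by rw [ContinuousMap.comp_apply, g.2 q hq, hf]⟩

/-- `β : I^{k+1} → X` is a *nullhomotopy* of the generalized loop `α : I^k → X`
(writing points of `I^{k+1}` as `(p, t)` with `t` the last coordinate):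
`β (p, 0) = x` for all `p`, `β (p, 1) = α p` for all `p`, and `β (p, t) = x`
for all `p ∈ ∂I^k`. -/
def IsNullhomotopy {k : ℕ} {X : Type} [TopologicalSpace X] {x : X}
    (α : GenLoop (Fin k) X x) (β : C((Fin (k + 1) → I), X)) : Prop :=
  (∀ q : Fin (k + 1) → I, q (Fin.last k) = 0 → β q = x) ∧
  (∀ q : Fin (k + 1) → I, q (Fin.last k) = 1 → β q = α fun i => q i.castSucc) ∧
  (∀ q : Fin (k + 1) → I, (∃ i : Fin k, q i.castSucc = 0 ∨ q i.castSucc = 1) → β q = x)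

/-- `c = β * (f ∘ β'⁻¹)` : the concatenation, in the last coordinate of the cube `I^{k+1}`,
of `β` with the reverse (in the last coordinate) of `f ∘ β'`. -/
def IsGluedWithReverse {k : ℕ} {X Y : Type} [TopologicalSpace X] [TopologicalSpace Y]
    (β : C((Fin (k + 1) → I), X)) (f : C(Y, X)) (β' : C((Fin (k + 1) → I), Y))
    (c : (Fin (k + 1) → I) → X) : Prop :=
  ∀ q : Fin (k + 1) → I, c q =
    if (q (Fin.last k) : ℝ) ≤ 1 / 2 then
      β (Function.update q (Fin.last k)
        (Set.projIcc 0 1 zero_le_one (2 * (q (Fin.last k) : ℝ))))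
    else
      f (β' (Function.update q (Fin.last k)
        (Set.projIcc 0 1 zero_le_one (2 - 2 * (q (Fin.last k) : ℝ)))))

/-!
A nullhomotopy of `α : I^k → X`, read along its last coordinate, is a path in `Ω^k X` from the
constant loop to `α`, and a Serre fibration `p : Y → X` induces a map `Ω^k Y → Ω^k X` with path
lifting. Start with the constant path `β₀` and let `β_{n+1}` be a lift of `γ_n⁻¹ * β_n` through
`p_{n+1}`. The endpoints of the paths `β_n` are then compatible, so they form the loop `α` in the
limit, and `β_n * (p_{n+1} ∘ β_{n+1})⁻¹ = β_n * (β_n⁻¹ * γ_n)` is homotopic to `γ_n`.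
-/

/-- The homotopy lifting property with respect to the single cube `I^k`; `IsSerreFibration p` asks
for it for all `k`. -/
def HasCubeLifting (k : ℕ) {E B : Type*} [TopologicalSpace E] [TopologicalSpace B]
    (p : C(E, B)) : Prop :=
  ∀ (f : C((Fin k → I), E)) (H : C(I × (Fin k → I), B)),
    (∀ q, H (0, q) = p (f q)) →
      ∃ G : C(I × (Fin k → I), E), (∀ q, G (0, q) = f q) ∧ ∀ z, p (G z) = H z

/-- The open box `I^k × {0} ∪ ∂I^k × I` in `I^{k+1}`: all faces but the lid, on which the last
coordinate is `1`. -/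
def openBox (k : ℕ) : Set (Fin (k + 1) → I) :=
  {q | q (Fin.last k) = 0 ∨ Fin.init q ∈ Cube.boundary (Fin k)}

section OpenBox

variable {k : ℕ}

@[fun_prop]
lemma continuous_init : Continuous (Fin.init : (Fin (k + 1) → I) → (Fin k → I)) :=
  continuous_id.finInit

lemma continuous_snoc :
    Continuous fun z : I × (Fin k → I) => (Fin.snoc z.2 z.1 : Fin (k + 1) → I) :=
  Continuous.finSnoc (A := fun _ => I) continuous_snd continuous_fst

lemma isClosed_cube_boundary (N : Type*) [Finite N] : IsClosed (Cube.boundary N) := by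
  simp only [Cube.boundary, Set.ofPred_exists]
  exact isClosed_iUnion_of_finite fun i =>
    (isClosed_eq (continuous_apply i) continuous_const).union
      (isClosed_eq (continuous_apply i) continuous_const)

lemma isCompact_openBox : IsCompact (openBox k) := by
  have hlast : IsClosed {q : Fin (k + 1) → I | q (Fin.last k) = 0} :=
    isClosed_eq (continuous_apply _) continuous_const
  exact (hlast.union ((isClosed_cube_boundary (Fin k)).preimage continuous_init)).isCompact

lemma openBox_nonempty : (openBox k).Nonempty :=
  ⟨fun _ => 0, Or.inl rfl⟩

/-- The distance from `q` to the open box in the sup metric, as a point of `I`. -/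
def openBoxDist (q : Fin (k + 1) → I) : I :=
  ⟨Metric.infDist q (openBox k), Metric.infDist_nonneg, by
    obtain ⟨b, hb⟩ := openBox_nonempty (k := k)
    exact (Metric.infDist_le_dist_of_mem hb).trans <|
      (dist_pi_le_iff zero_le_one).2 fun i => Real.dist_le_of_mem_Icc_01 (q i).2 (b i).2⟩

@[fun_prop]
lemma continuous_openBoxDist : Continuous (openBoxDist (k := k)) :=
  (Metric.continuous_infDist_pt _).subtype_mk _

lemma openBoxDist_eq_zero {q : Fin (k + 1) → I} (hq : q ∈ openBox k) : openBoxDist q = 0 :=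
  Subtype.ext (Metric.infDist_zero_of_mem hq)

lemma exists_coord_le_openBoxDist (q : Fin (k + 1) → I) :
    (q (Fin.last k) : ℝ) ≤ openBoxDist q ∨
      ∃ i : Fin k, (q i.castSucc : ℝ) ≤ openBoxDist q ∨
        1 - openBoxDist q ≤ (q i.castSucc : ℝ) := by
  obtain ⟨b, hb, hqb⟩ := isCompact_openBox.exists_infDist_eq_dist openBox_nonempty q
  have hcoord : ∀ j, |(q j : ℝ) - b j| ≤ openBoxDist q := fun j =>
    (dist_le_pi_dist q b j).trans_eq hqb.symm
  rcases hb with hlast | ⟨i, hzero | hone⟩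
  · exact Or.inl (by simpa [hlast] using (abs_le.1 (hcoord (Fin.last k))).2)
  · exact Or.inr ⟨i, Or.inl (by
      simpa [show b i.castSucc = 0 from hzero] using (abs_le.1 (hcoord i.castSucc)).2)⟩
  · have := (abs_le.1 (hcoord i.castSucc)).1
    rw [show b i.castSucc = 1 from hone, Set.Icc.coe_one] at this
    exact Or.inr ⟨i, Or.inr (by linarith)⟩

/-- Pushes the cube towards the open box for time `r`: the last coordinate decreases by `r`, the
others are stretched away from `1 / 2` by the factor `1 + r`, and the result is clamped to the
cube. -/
def pushToBox (r : ℝ) (q : Fin (k + 1) → I) : Fin (k + 1) → I :=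
  fun j => Set.projIcc 0 1 zero_le_one
    (if j = Fin.last k then q j - r else 1 / 2 + (q j - 1 / 2) * (1 + r))

@[fun_prop]
lemma continuous_pushToBox {Z : Type*} [TopologicalSpace Z] {r : Z → ℝ}
    {q : Z → Fin (k + 1) → I} (hr : Continuous r) (hq : Continuous q) :
    Continuous fun z => pushToBox (r z) (q z) := by
  refine continuous_pi fun j => continuous_projIcc.comp ?_
  split_ifs <;> fun_prop

lemma pushToBox_zero (q : Fin (k + 1) → I) : pushToBox 0 q = q := by
  funext j
  simp [pushToBox]

lemma pushToBox_mem_openBox {r : ℝ} {q : Fin (k + 1) → I} (hr : 4 * openBoxDist q ≤ r) :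
    pushToBox r q ∈ openBox k := by
  have hd : (0 : ℝ) ≤ openBoxDist q := (openBoxDist q).2.1
  have bottom (h : (q (Fin.last k) : ℝ) ≤ r) : pushToBox r q ∈ openBox k :=
    Or.inl (Set.projIcc_of_le_left _ (by simpa using h))
  by_cases hfar : 1 ≤ r
  · exact bottom ((q (Fin.last k)).2.2.trans hfar)
  rcases exists_coord_le_openBoxDist q with hlast | ⟨i, hzero | hone⟩
  · exact bottom (by linarith)
  · -- A coordinate equal to `r / 4` is stretched to `-r * (1 - r) / 4`.
    refine Or.inr ⟨i, Or.inl (Set.projIcc_of_le_left zero_le_one ?_)⟩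
    rw [if_neg (Fin.castSucc_ne_last i)]
    nlinarith
  · refine Or.inr ⟨i, Or.inr (Set.projIcc_of_right_le zero_le_one ?_)⟩
    rw [if_neg (Fin.castSucc_ne_last i)]
    nlinarith

-- Push the whole cube into the open box, where the lift is prescribed, lift the reverse
-- deformation, and evaluate at `q` at time `openBoxDist q`, when it has come back to `q`.
theorem HasCubeLifting.exists_lift_extending {E B : Type*} [TopologicalSpace E]
    [TopologicalSpace B] {p : C(E, B)} (hp : HasCubeLifting (k + 1) p)
    (h : C((Fin (k + 1) → I), B)) (f : C(openBox k, E)) (hf : ∀ q, p (f q) = h q) :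
    ∃ G : C((Fin (k + 1) → I), E), (∀ q : openBox k, G q = f q) ∧ ∀ q, p (G q) = h q := by
  let retract : C((Fin (k + 1) → I), openBox k) :=
    ⟨fun q => ⟨pushToBox (4 * openBoxDist q) q, pushToBox_mem_openBox le_rfl⟩, by fun_prop⟩
  obtain ⟨G, hG₀, hG⟩ := hp (f.comp retract)
    ⟨fun z => h (pushToBox (4 * (openBoxDist z.2 - z.1)) z.2), by fun_prop⟩
    (fun q => by simp [retract, hf])
  refine ⟨⟨fun q => G (openBoxDist q, q), by fun_prop⟩, fun q => ?_, fun q => ?_⟩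
  · have hretract : retract q = q := Subtype.ext <| by
      simp [retract, openBoxDist_eq_zero q.2, pushToBox_zero]
    simp [openBoxDist_eq_zero q.2, hG₀, hretract]
  · simp [hG, pushToBox_zero]

end OpenBox

lemma path_homotopic_trans_symm_trans {Z : Type*} [TopologicalSpace Z] {a b c : Z}
    (P : Path a b) (L : Path a c) : L.Homotopic (P.trans (L.symm.trans P).symm) := by
  rw [← Path.Homotopic.Quotient.eq]
  simp only [Path.trans_symm, Path.symm_symm, Path.Homotopic.Quotient.mk_trans,
    Path.Homotopic.Quotient.mk_symm, ← Path.Homotopic.Quotient.trans_assoc,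
    Path.Homotopic.Quotient.trans_symm, Path.Homotopic.Quotient.refl_trans]

section PathsOfLoops

variable {k : ℕ} {X : Type*} [TopologicalSpace X] {x : X} {a b : Ω^ (Fin k) X x}

/-- The map `I^{k+1} → X` adjoint to a path in `Ω^k X`, the path parameter becoming the last
coordinate. -/
def cubeOfPath (P : Path a b) : C((Fin (k + 1) → I), X) :=
  ⟨fun q => P (q (Fin.last k)) (Fin.init q), by fun_prop⟩

lemma cubeOfPath_apply (P : Path a b) (q : Fin (k + 1) → I) :
    cubeOfPath P q = P (q (Fin.last k)) (Fin.init q) :=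
  rfl

/-- The slices of a map `I^{k+1} → X` perpendicular to the last coordinate, as a curve in `Ω^k X`:
the inverse of `cubeOfPath` for maps that are constant on `∂I^k × I`. -/
def slices (G : C((Fin (k + 1) → I), X))
    (hside : ∀ q : Fin (k + 1) → I, Fin.init q ∈ Cube.boundary (Fin k) → G q = x) :
    C(I, Ω^ (Fin k) X x) where
  toFun t := ⟨⟨fun q => G (Fin.snoc q t : Fin (k + 1) → I),
    G.continuous.comp (continuous_snoc.comp (Continuous.prodMk_right t))⟩,
    fun q hq => hside _ (by simpa only [Fin.init_snoc (α := fun _ => I)] using hq)⟩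
  continuous_toFun := Continuous.subtype_mk
    (G.comp ⟨_, continuous_snoc⟩).curry.continuous _

lemma slices_eq_iff {G : C((Fin (k + 1) → I), X)}
    {hside : ∀ q : Fin (k + 1) → I, Fin.init q ∈ Cube.boundary (Fin k) → G q = x} {t : I} :
    slices G hside t = a ↔ ∀ q : Fin (k + 1) → I, q (Fin.last k) = t → G q = a (Fin.init q) := by
  refine ⟨?_, fun h => GenLoop.ext _ _ fun q => ?_⟩
  · rintro rfl q rfl
    exact congrArg G (Fin.snoc_init_self (α := fun _ => I) q).symm
  · exact (h (Fin.snoc q t : Fin (k + 1) → I) (Fin.snoc_last (α := fun _ => I) ..)).trans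
      (congrArg a (Fin.init_snoc (α := fun _ => I) ..))

/-- The loop in `Ω^{k+1} X` adjoint to a loop in `Ω^k X` at the constant loop. It is Mathlib's
`GenLoop.fromLoop`, with `Fin k` in place of `{j // j ≠ Fin.last k}`. -/
def genLoopOfPath (P : Ω (Ω^ (Fin k) X x) GenLoop.const) : Ω^ (Fin (k + 1)) X x :=
  ⟨cubeOfPath P, by
    rintro q ⟨j, hj⟩
    induction j using Fin.lastCases with
    | last => rcases hj with h | h <;> simp [cubeOfPath_apply, h]
    | cast i => exact GenLoop.boundary _ _ ⟨i, hj⟩⟩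

/-- The inverse of `genLoopOfPath`. -/
def pathOfGenLoop (γ : Ω^ (Fin (k + 1)) X x) : Ω (Ω^ (Fin k) X x) GenLoop.const where
  toContinuousMap := slices γ.1 fun _ ⟨i, hi⟩ => γ.2 _ ⟨i.castSucc, hi⟩
  source' := slices_eq_iff.2 fun q h => γ.2 q ⟨_, Or.inl h⟩
  target' := slices_eq_iff.2 fun q h => γ.2 q ⟨_, Or.inr h⟩

lemma genLoopOfPath_pathOfGenLoop (γ : Ω^ (Fin (k + 1)) X x) :
    genLoopOfPath (pathOfGenLoop γ) = γ :=
  GenLoop.ext _ _ fun q => congrArg γ (Fin.snoc_init_self (α := fun _ => I) q)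

lemma genLoopOfPath_homotopic {P Q : Ω (Ω^ (Fin k) X x) GenLoop.const} (h : P.Homotopic Q) :
    GenLoop.Homotopic (genLoopOfPath P) (genLoopOfPath Q) := by
  obtain ⟨F⟩ := h
  refine ⟨⟨⟨⟨fun z => F (z.1, z.2 (Fin.last k)) (Fin.init z.2), by fun_prop⟩,
    fun q => ?_, fun q => ?_⟩, fun t q hq => ?_⟩⟩
  · exact congrArg (· (Fin.init q)) (F.apply_zero _)
  · exact congrArg (· (Fin.init q)) (F.apply_one _)
  · refine Eq.trans ?_ ((genLoopOfPath P).2 q hq).symm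
    obtain ⟨j, hj⟩ := hq
    induction j using Fin.lastCases with
    | last => rcases hj with h | h <;> simp [h]
    | cast i => exact GenLoop.boundary _ _ ⟨i, hj⟩

end PathsOfLoops

section Nullhomotopies

variable {k : ℕ} {X Y : Type} [TopologicalSpace X] [TopologicalSpace Y] {x : X} {y : Y}

lemma isNullhomotopy_cubeOfPath {a : Ω^ (Fin k) X x} (P : Path GenLoop.const a) :
    IsNullhomotopy a (cubeOfPath P) := by
  refine ⟨fun q h => ?_, fun q h => ?_, fun q h => GenLoop.boundary _ _ h⟩
  · simp [cubeOfPath_apply, h]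
  · simp only [cubeOfPath_apply, h, P.target]
    rfl

lemma IsNullhomotopy.piCls_eq_piConst {a : Ω^ (Fin k) X x} {β : C((Fin (k + 1) → I), X)}
    (h : IsNullhomotopy a β) : piCls a = piConst (Fin k) x := by
  let P : Path GenLoop.const a :=
    ⟨slices β h.2.2, slices_eq_iff.2 h.1, slices_eq_iff.2 h.2.1⟩
  refine Quotient.sound (GenLoop.Homotopic.symm ⟨⟨⟨⟨fun z => P z.1 z.2, by fun_prop⟩,
    fun q => congrArg (· q) P.source, fun q => congrArg (· q) P.target⟩, fun t q hq => ?_⟩⟩)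
  exact GenLoop.boundary (P t) q hq

lemma isGluedWithReverse_cubeOfPath {a : Ω^ (Fin k) X x} {a' : Ω^ (Fin k) Y y} {f : C(Y, X)}
    (hf : f y = x) (P Q : Path GenLoop.const a) (P' : Path GenLoop.const a')
    (hQ : ∀ t, genLoopMap (Fin k) f hf (P' t) = Q t) :
    IsGluedWithReverse (cubeOfPath P) f (cubeOfPath P') (genLoopOfPath (P.trans Q.symm)) := by
  intro q
  have init_update (t : I) : Fin.init (Function.update q (Fin.last k) t) = Fin.init q :=
    Fin.init_update_last (α := fun _ => I) ..
  have h0 := (q (Fin.last k)).2.1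
  have h1 := (q (Fin.last k)).2.2
  change (P.trans Q.symm) (q (Fin.last k)) (Fin.init q) = _
  simp only [cubeOfPath_apply, init_update, Function.update_self]
  rw [Path.trans_apply]
  split_ifs with hq
  · rw [Set.projIcc_of_mem zero_le_one ⟨by linarith, by linarith⟩]
  · rw [Set.projIcc_of_mem zero_le_one ⟨by linarith, by linarith⟩]
    refine (DFunLike.congr_fun ?_ (Fin.init q)).trans
      (DFunLike.congr_fun (hQ ⟨2 - 2 * q (Fin.last k), _⟩) (Fin.init q)).symm
    exact congrArg Q (Subtype.ext (by simp only [unitInterval.coe_symm_eq]; ring))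

lemma piMap_one {N : Type} [DecidableEq N] [Nonempty N] (f : C(X, Y)) (hf : f x = y) :
    piMap N f hf 1 = 1 := by
  rw [HomotopyGroup.one_def, HomotopyGroup.one_def]
  exact congrArg (Quotient.mk _) (GenLoop.ext _ _ fun _ => hf)

theorem HasCubeLifting.exists_path_lift {p : C(Y, X)} (hp : HasCubeLifting (k + 1) p)
    (hxy : p y = x) {a b : Ω^ (Fin k) X x} (P : Path a b) (a' : Ω^ (Fin k) Y y)
    (ha : genLoopMap (Fin k) p hxy a' = a) :
    ∃ (b' : Ω^ (Fin k) Y y) (P' : Path a' b'), ∀ t, genLoopMap (Fin k) p hxy (P' t) = P t := by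
  let f : C(openBox k, Y) := ⟨fun q => a' (Fin.init q.1), by fun_prop⟩
  have hf : ∀ q, p (f q) = cubeOfPath P q := by
    rintro ⟨q, hbottom | hside⟩
    · exact (DFunLike.congr_fun ha (Fin.init q)).trans (by simp [cubeOfPath_apply, hbottom])
    · exact (congrArg p (a'.2 _ hside)).trans <|
        hxy.trans ((P (q (Fin.last k))).2 _ hside).symm
  obtain ⟨G, hGf, hpG⟩ := hp.exists_lift_extending (cubeOfPath P) f hf
  have hside (q : Fin (k + 1) → I) (hq : Fin.init q ∈ Cube.boundary (Fin k)) : G q = y :=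
    (hGf ⟨q, Or.inr hq⟩).trans (a'.2 _ hq)
  refine ⟨slices G hside 1, ⟨slices G hside,
    slices_eq_iff.2 fun q hq => hGf ⟨q, Or.inl hq⟩, rfl⟩, fun t => GenLoop.ext _ _ fun q => ?_⟩
  refine (hpG (Fin.snoc q t : Fin (k + 1) → I)).trans ?_
  simp [cubeOfPath_apply]

end Nullhomotopies

section Towers

variable {X : ℕ → Type} [∀ n, TopologicalSpace (X n)] {p : ∀ n, C(X (n + 1), X n)}
  {x : ∀ n, X n} (hx : ∀ n, p n (x (n + 1)) = x n) {k : ℕ}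

/-- The loop in the inverse limit with given compatible projections. -/
def TowerLim.genLoop (α : ∀ n, Ω^ (Fin k) (X n) (x n))
    (hα : ∀ n, genLoopMap (Fin k) (p n) (hx n) (α (n + 1)) = α n) :
    Ω^ (Fin k) (TowerLim X p) ⟨x, hx⟩ :=
  ⟨⟨fun q => ⟨fun n => α n q, fun n => DFunLike.congr_fun (hα n) q⟩,
    Continuous.subtype_mk (continuous_pi fun n => map_continuous (α n).1) _⟩,
    fun q hq => Subtype.ext (funext fun n => (α n).2 q hq)⟩

lemma exists_nullhomotopy_tower (hp : ∀ n, HasCubeLifting (k + 1) (p n))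
    (L : ∀ n, Ω (Ω^ (Fin k) (X n) (x n)) GenLoop.const) :
    ∃ (α : ∀ n, Ω^ (Fin k) (X n) (x n)) (P : ∀ n, Path GenLoop.const (α n)),
      ∀ n t, genLoopMap (Fin k) (p n) (hx n) (P (n + 1) t) = ((L n).symm.trans (P n)) t := by
  choose α' P' hP' using fun n (a : Ω^ (Fin k) (X n) (x n)) (P : Path GenLoop.const a) =>
    (hp n).exists_path_lift (hx n) ((L n).symm.trans P) GenLoop.const
      (GenLoop.ext _ _ fun _ => hx n)
  let tower : ∀ n, Σ a : Ω^ (Fin k) (X n) (x n), Path GenLoop.const a := fun n =>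
    Nat.rec ⟨GenLoop.const, Path.refl _⟩ (fun n s => ⟨α' n s.1 s.2, P' n s.1 s.2⟩) n
  exact ⟨fun n => (tower n).1, fun n => (tower n).2, fun n => hP' n _ _⟩

theorem phiTilde_surjective_general (hp : ∀ n, HasCubeLifting (k + 1) (p n))
    (γ : ∀ n, Ω^ (Fin (k + 1)) (X n) (x n)) :
    ∃ (α : Ω^ (Fin k) (TowerLim X p) ⟨x, hx⟩) (β : ∀ n, C((Fin (k + 1) → I), X n))
      (c : ∀ n, Ω^ (Fin (k + 1)) (X n) (x n)),
      (∀ n, IsNullhomotopy (genLoopMap (Fin k) (TowerLim.proj n) rfl α) (β n)) ∧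
      (∀ n, IsGluedWithReverse (β n) (p n) (β (n + 1)) (c n)) ∧
      ∀ n, piCls (γ n) = piCls (c n) := by
  obtain ⟨α, P, hP⟩ := exists_nullhomotopy_tower hx hp fun n => pathOfGenLoop (γ n)
  have hα : ∀ n, genLoopMap (Fin k) (p n) (hx n) (α (n + 1)) = α n := fun n => by
    simpa using hP n 1
  refine ⟨TowerLim.genLoop hx α hα, fun n => cubeOfPath (P n),
    fun n => genLoopOfPath ((P n).trans ((pathOfGenLoop (γ n)).symm.trans (P n)).symm),
    fun n => isNullhomotopy_cubeOfPath (P n),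
    fun n => isGluedWithReverse_cubeOfPath (hx n) _ _ _ (hP n), fun n => Quotient.sound ?_⟩
  have hγ := genLoopOfPath_homotopic
    (path_homotopic_trans_symm_trans (P n) (pathOfGenLoop (γ n)))
  rwa [genLoopOfPath_pathOfGenLoop] at hγ

end Towers

/-- **Proposition 4.6 (`φ̃` is surjective).**  Let `(X n, p n)` be a tower of fibrations of
pointed topological spaces, with basepoints the components `x n` of a chosen point of the
inverse limit, and let `k ≥ 0`.  Then `φ̃ : Ker P → lim¹_n π_{k+1} X_n` is surjective: for
every family of maps `γ_n : I^{k+1} → X_n` sending `∂I^{k+1}` to the basepoint there is a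
map `α : I^k → lim_n X_n` sending `∂I^k` to the basepoint, whose class lies in the kernel
of `P : π_k (lim_n X_n) → lim_n π_k X_n`, together with a family of nullhomotopies `β_n` of
the projections `α_n = P_n ∘ α`, such that the glued family
`([β_n * (p_{n+1} ∘ β_{n+1}⁻¹)])_n` lies in the same `lim¹`-orbit as `([γ_n])_n`; that is,
`φ̃([α])` is the element of `lim¹_n π_{k+1} X_n` represented by `([γ_n])_n`. -/
theorem phiTilde_surjective
    (X : ℕ → Type) [∀ n, TopologicalSpace (X n)] (p : ∀ n, C(X (n + 1), X n))
    (hfib : ∀ n, IsSerreFibration (p n))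
    (x : ∀ n, X n) (hx : ∀ n, p n (x (n + 1)) = x n)
    (k : ℕ)
    (γ : ∀ n, GenLoop (Fin (k + 1)) (X n) (x n)) :
    ∃ α : GenLoop (Fin k) (TowerLim X p) (⟨x, hx⟩ : TowerLim X p),
      (∀ n, piProjMap k hx n (piCls α) = piConst (Fin k) (x n)) ∧
      ∃ β : ∀ n, C((Fin (k + 1) → I), X n),
        (∀ n, IsNullhomotopy (genLoopMap (Fin k) (TowerLim.proj n) rfl α) (β n)) ∧
        ∃ c : ∀ n, GenLoop (Fin (k + 1)) (X n) (x n),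
          (∀ n, IsGluedWithReverse (β n) (p n) (β (n + 1)) (c n)) ∧
          ∃ g : ∀ n, HomotopyGroup (Fin (k + 1)) (X n) (x n),
            ∀ n, piCls (γ n)
              = (piTowerMap (k + 1) hx n (g (n + 1)))⁻¹ * piCls (c n) * g n := by
  obtain ⟨α, β, c, hβ, hc, hγ⟩ := phiTilde_surjective_general hx (fun n => hfib n (k + 1)) γ
  exact ⟨α, fun n => (hβ n).piCls_eq_piConst, β, hβ, c, hc, fun _ => 1,
    fun n => by simp [piTowerMap, piMap_one, hγ n]⟩

end
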